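/- (Equations (ymer1)–(ymer2).) E[(W + max(Z_1, Z_2, Z_3))²] = 4 + 3√3/(2π), and consequently Var(W + max(Z_1, Z_2, Z_3)) = 4 − (27 − 6√3)/(4π). -/

import Mathlib

open MeasureTheory ProbabilityTheory Real Filter
open scoped ENNReal Topology

/-- angular part -/
noncomputable def angMax (t : ℝ) : ℝ :=
  max (cos t) (max (cos (t - 2 * π / 3)) (cos (t + 2 * π / 3)))

/-- planar maximum -/
noncomputable def planeMax (p : ℝ × ℝ) : ℝ :=
  max p.1 (max (-p.1 / 2 + √3 / 2 * p.2) (-p.1 / 2 - √3 / 2 * p.2))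

lemma cos_two_pi_div_three' : cos (2 * π / 3) = -1 / 2 := by
  rw [show 2 * π / 3 = π - π / 3 by ring, cos_pi_sub, cos_pi_div_three]; norm_num

lemma sin_two_pi_div_three' : sin (2 * π / 3) = √3 / 2 := by
  rw [show 2 * π / 3 = π - π / 3 by ring, sin_pi_sub, sin_pi_div_three]

lemma planeMax_polar (r t : ℝ) (hr : 0 ≤ r) :
    planeMax (r * cos t, r * sin t) = r * angMax t := by
  unfold planeMax angMax
  rw [mul_max_of_nonneg _ _ hr, mul_max_of_nonneg _ _ hr, cos_sub, cos_add,
    cos_two_pi_div_three', sin_two_pi_div_three']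
  congr 2 <;> ring_nf

lemma angMax_continuous : Continuous angMax := by unfold angMax; fun_prop

lemma planeMax_continuous : Continuous planeMax := by unfold planeMax; fun_prop

lemma angMax_periodic : Function.Periodic angMax (2 * π / 3) := by
  intro t
  unfold angMax
  rw [show t + 2 * π / 3 - 2 * π / 3 = t by ring,
    show t + 2 * π / 3 + 2 * π / 3 = t - 2 * π / 3 + 2 * π by ring, cos_add_two_pi]
  ac_rfl

lemma angMax_eq (t : ℝ) (h1 : -(π / 3) ≤ t) (h2 : t ≤ π / 3) : angMax t = cos t := by
  have h : cos (π / 3) ≤ cos t := by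
    rw [← cos_abs t]
    exact cos_le_cos_of_nonneg_of_le_pi (abs_nonneg t) (by linarith [pi_pos]) (abs_le.2 ⟨h1, h2⟩)
  unfold angMax
  refine max_eq_left (max_le (le_trans ?_ h) (le_trans ?_ h))
  · rw [← cos_neg]
    exact cos_le_cos_of_nonneg_of_le_pi (by linarith [pi_pos]) (by linarith) (by linarith)
  · exact cos_le_cos_of_nonneg_of_le_pi (by linarith [pi_pos]) (by linarith) (by linarith)

lemma integral_angMax_pow (k : ℕ) :
    ∫ t in Set.Ioo (-π) π, angMax t ^ k = 3 * ∫ t in (-(π/3))..(π/3), cos t ^ k := by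
  have hp : Function.Periodic (fun t => angMax t ^ k) (2 * π / 3) := fun t => by
    simp only [angMax_periodic t]
  have hi : ∀ a b, IntervalIntegrable (fun t => angMax t ^ k) volume a b :=
    fun a b => (angMax_continuous.pow k).intervalIntegrable a b
  rw [← integral_Ioc_eq_integral_Ioo, ← intervalIntegral.integral_of_le (by linarith [pi_pos]),
    ← intervalIntegral.integral_add_adjacent_intervals (hi _ (-(π/3))) (hi _ _),
    ← intervalIntegral.integral_add_adjacent_intervals (hi (-(π/3)) (π/3)) (hi _ _)]
  have e1 : ∫ t in (-π)..(-(π/3)), angMax t ^ k = ∫ t in (-(π/3))..(π/3), angMax t ^ k := by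
    have := hp.intervalIntegral_add_eq (-π) (-(π/3))
    convert this using 2 <;> ring
  have e2 : ∫ t in (π/3)..π, angMax t ^ k = ∫ t in (-(π/3))..(π/3), angMax t ^ k := by
    have := hp.intervalIntegral_add_eq (π/3) (-(π/3))
    convert this using 2 <;> ring
  have e3 : ∫ t in (-(π/3))..(π/3), angMax t ^ k = ∫ t in (-(π/3))..(π/3), cos t ^ k := by
    apply intervalIntegral.integral_congr
    intro t ht
    rw [Set.uIcc_of_le (by linarith [pi_pos])] at ht
    simp only [angMax_eq t ht.1 ht.2]
  rw [e1, e2, e3]; ring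

lemma gauss_prod_integral (f : ℝ × ℝ → ℝ) :
    ∫ p, f p ∂((gaussianReal 0 1).prod (gaussianReal 0 1))
      = ∫ p : ℝ × ℝ, (2 * π)⁻¹ * exp (-(p.1 ^ 2 + p.2 ^ 2) / 2) * f p := by
  rw [gaussianReal_of_var_ne_zero _ one_ne_zero,
    prod_withDensity (measurable_gaussianPDF _ _) (measurable_gaussianPDF _ _),
    integral_withDensity_eq_integral_toReal_smul, ← Measure.volume_eq_prod]
  · congr 1
    ext p
    simp only [ENNReal.toReal_mul, toReal_gaussianPDF, gaussianPDFReal, smul_eq_mul]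
    congr 1
    have h1 : √(2 * π) * √(2 * π) = 2 * π := mul_self_sqrt (by positivity)
    simp only [NNReal.coe_one, mul_one, sub_zero]
    rw [mul_mul_mul_comm, ← mul_inv, h1, ← exp_add]
    congr 2; ring
  · fun_prop
  · filter_upwards with p
    exact ENNReal.mul_lt_top gaussianPDF_lt_top gaussianPDF_lt_top

lemma radial (k : ℕ) : ∫ p, planeMax p ^ k ∂((gaussianReal 0 1).prod (gaussianReal 0 1))
      = (2 * π)⁻¹ * (∫ r in Set.Ioi (0:ℝ), r ^ (((k + 1 : ℕ)) : ℝ) * exp (-(1/2) * r ^ (2:ℝ))) *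
        (3 * ∫ t in (-(π/3))..(π/3), cos t ^ k) := by
  rw [gauss_prod_integral, ← integral_comp_polarCoord_symm, ← integral_angMax_pow, polarCoord_target,
    mul_assoc, ← setIntegral_prod_mul, ← integral_const_mul, Measure.volume_eq_prod]
  refine setIntegral_congr_fun (measurableSet_Ioi.prod measurableSet_Ioo) ?_
  rintro ⟨r, t⟩ h
  have hr : 0 ≤ r := le_of_lt h.1
  simp only [polarCoord_symm_apply, smul_eq_mul, planeMax_polar r t hr, rpow_natCast]
  rw [show (r * cos t) ^ 2 + (r * sin t) ^ 2 = r ^ 2 by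
    linear_combination r ^ 2 * sin_sq_add_cos_sq t, show (r ^ (2:ℝ)) = r ^ 2 from rpow_natCast r 2,
    show -(1/2) * r ^ 2 = -r ^ 2 / 2 by ring]
  ring

lemma plane_one : ∫ p, planeMax p ∂((gaussianReal 0 1).prod (gaussianReal 0 1))
    = 3 * √3 / (2 * √(2 * π)) := by
  have := radial 1
  simp only [pow_one] at this
  rw [this, integral_rpow_mul_exp_neg_mul_rpow (by norm_num) (by norm_num) (by norm_num)]
  rw [integral_cos, sin_neg, sin_pi_div_three]
  have : Gamma ((((1+1:ℕ):ℝ) + 1) / 2) = √π / 2 := by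
    rw [show (((1+1:ℕ):ℝ) + 1) / 2 = 1 / 2 + 1 by norm_num, Gamma_add_one (by norm_num),
      Gamma_one_half_eq]; ring
  rw [this]
  have h2 : (1 / 2 : ℝ) ^ (-(((1+1:ℕ):ℝ) + 1) / 2) = 2 * √2 := by
    rw [show (-(((1+1:ℕ):ℝ) + 1) / 2) = - (1 + 1 / 2) by norm_num, one_div, 
      inv_rpow (by norm_num), rpow_neg (by norm_num), inv_inv, rpow_add (by norm_num), rpow_one,
      sqrt_eq_rpow]; norm_num
  rw [h2, sqrt_mul (by norm_num)]
  have hp := sq_sqrt pi_pos.le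
  have h22 : √2 ^ 2 = 2 := sq_sqrt (by norm_num)
  have : 0 < √π := sqrt_pos.2 pi_pos
  have : 0 < √2 := by positivity
  nth_rewrite 1 [← hp]
  field_simp
  rw [h22]; ring

lemma plane_two : ∫ p, planeMax p ^ 2 ∂((gaussianReal 0 1).prod (gaussianReal 0 1))
    = 1 + 3 * √3 / (4 * π) := by
  rw [radial 2, integral_rpow_mul_exp_neg_mul_rpow (by norm_num) (by norm_num) (by norm_num)]
  rw [integral_cos_sq, sin_neg, sin_pi_div_three, cos_neg, cos_pi_div_three]
  have : Gamma ((((2+1:ℕ):ℝ) + 1) / 2) = 1 := by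
    rw [show (((2+1:ℕ):ℝ) + 1) / 2 = 2 by norm_num, Gamma_two]
  rw [this]
  have h2 : (1 / 2 : ℝ) ^ (-(((2+1:ℕ):ℝ) + 1) / 2) = 4 := by
    rw [show (-(((2+1:ℕ):ℝ) + 1) / 2) = - (2:ℕ) by norm_num, rpow_neg (by norm_num), rpow_natCast]
    norm_num
  rw [h2]
  have := pi_pos
  field_simp
  ring

lemma joint_law {Ω : Type*} [MeasurableSpace Ω] (P : Measure Ω) [IsProbabilityMeasure P]
    (X Y : Ω → ℝ) (hX : Measurable X) (hY : Measurable Y)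
    (h : ∀ a b : ℝ, P.map (fun ω => a * X ω + b * Y ω)
      = gaussianReal 0 (Real.toNNReal (a ^ 2 + b ^ 2))) :
    P.map (fun ω => (X ω, Y ω)) = (gaussianReal 0 1).prod (gaussianReal 0 1) := by
  have : IsProbabilityMeasure (P.map (fun ω => (X ω, Y ω))) :=
    Measure.isProbabilityMeasure_map (by fun_prop)
  apply Measure.ext_of_charFunDual
  ext L
  have hL : ∀ x y : ℝ, L (x, y) = L (1, 0) * x + L (0, 1) * y := by
    intro x y
    rw [show ((x, y) : ℝ × ℝ) = x • (1, 0) + y • (0, 1) by simp, map_add, map_smul, map_smul]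
    simp [mul_comm]
  rw [charFunDual_prod, charFunDual_eq_charFun_map_one, Measure.map_map (by fun_prop) (by fun_prop)]
  have e : (L ∘ fun ω => (X ω, Y ω)) = fun ω => L (1, 0) * X ω + L (0, 1) * Y ω := by
    ext ω; exact hL _ _
  rw [e, h, charFun_gaussianReal, charFunDual_eq_charFun_map_one, charFunDual_eq_charFun_map_one,
    gaussianReal_map_continuousLinearMap, gaussianReal_map_continuousLinearMap,
    charFun_gaussianReal, charFun_gaussianReal, ← Complex.exp_add]
  congr 1
  have h0 : 0 ≤ (L (1,0))^2 + (L (0,1))^2 := by positivity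
  have h1 := Real.coe_toNNReal _ h0
  have h00 : L (0, 0) = 0 := map_zero L
  simp [sq_nonneg, h00]
  ring

/-- equations (ymer1)–(ymer2): `E[(W + max(Z₁,Z₂,Z₃))²] = 4 + 3√3/(2π)`
and `Var(W + max(Z₁,Z₂,Z₃)) = 4 − (27 − 6√3)/(4π)`.  Here `W ∼ N(0,2)` is independent of the
centered Gaussian vector `(Z₁,Z₂,Z₃)` with covariance matrix `[[2,−1,−1],[−1,2,−1],[−1,−1,2]]`. -/
theorem second_moment_and_variance_of_limit
    {Ω : Type*} [MeasurableSpace Ω] (P : Measure Ω) [IsProbabilityMeasure P]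
    (W Z1 Z2 Z3 : Ω → ℝ)
    (hWm : Measurable W) (hZ1 : Measurable Z1) (hZ2 : Measurable Z2) (hZ3 : Measurable Z3)
    (hW : P.map W = gaussianReal 0 2)
    (hZ : ∀ a b c : ℝ, P.map (fun ω => a * Z1 ω + b * Z2 ω + c * Z3 ω)
        = gaussianReal 0 (Real.toNNReal
            (2 * (a ^ 2 + b ^ 2 + c ^ 2) - 2 * (a * b + a * c + b * c))))
    (hindep : IndepFun W (fun ω => (Z1 ω, Z2 ω, Z3 ω)) P) :
    ∫ ω, (W ω + max (Z1 ω) (max (Z2 ω) (Z3 ω))) ^ 2 ∂P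
        = 4 + 3 * Real.sqrt 3 / (2 * π) ∧
    variance (fun ω => W ω + max (Z1 ω) (max (Z2 ω) (Z3 ω))) P
        = 4 - (27 - 6 * Real.sqrt 3) / (4 * π) := by
  have hg : ∀ V : Ω → ℝ, Measurable V → ∀ v, P.map V = gaussianReal 0 v → MemLp V 2 P := by
    intro V hV v h
    have := memLp_id_gaussianReal (μ := 0) (v := v) 2
    rw [← h, memLp_map_measure_iff (by fun_prop) (by fun_prop)] at this
    exact this
  set M : Ω → ℝ := fun ω => max (Z1 ω) (max (Z2 ω) (Z3 ω)) with hM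
  have hWL : MemLp W 2 P := hg W hWm _ hW
  have hL1 : MemLp Z1 2 P := by
    have := hZ 1 0 0
    simp only [one_mul, zero_mul, add_zero] at this
    exact hg _ hZ1 _ this
  have hL2 : MemLp Z2 2 P := by
    have := hZ 0 1 0
    simp only [one_mul, zero_mul, add_zero, zero_add] at this
    exact hg _ hZ2 _ this
  have hL3 : MemLp Z3 2 P := by
    have := hZ 0 0 1
    simp only [one_mul, zero_mul, zero_add] at this
    exact hg _ hZ3 _ this
  have hML : MemLp M 2 P := hL1.sup (hL2.sup hL3)
  have hMm : Measurable M := by fun_prop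
  have hsum : ∀ᵐ ω ∂P, Z1 ω + Z2 ω + Z3 ω = 0 := by
    have := hZ 1 1 1
    norm_num at this
    have h2 : ∀ᵐ x ∂(P.map fun ω => Z1 ω + Z2 ω + Z3 ω), x = 0 := by
      rw [this]; simp [ae_dirac_eq]
    exact ae_of_ae_map (by fun_prop) h2
  have s2 : √2 ^ 2 = (2:ℝ) := sq_sqrt (by norm_num)
  have s3 : √3 ^ 2 = (3:ℝ) := sq_sqrt (by norm_num)
  have p2 : 0 < √(2:ℝ) := by positivity
  have p3 : 0 < √(3:ℝ) := by positivity
  have hlaw := joint_law P (fun ω => Z1 ω / √2) (fun ω => (Z2 ω - Z3 ω) / (√2 * √3))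
    (by fun_prop) (by fun_prop) (by
      intro a b
      have := hZ (a / √2) (b / (√2 * √3)) (-(b / (√2 * √3)))
      convert this using 2
      · ext ω; ring
      · congr 1
        field_simp
        rw [s2, s3]; ring)
  have hMe : ∀ᵐ ω ∂P, M ω = √2 * planeMax (Z1 ω / √2, (Z2 ω - Z3 ω) / (√2 * √3)) := by
    filter_upwards [hsum] with ω h
    simp only [hM, planeMax]
    rw [mul_max_of_nonneg _ _ p2.le, mul_max_of_nonneg _ _ p2.le]
    congr 2
    · field_simp
    · field_simp; linarith
    · field_simp; linarith
  have hI : ∀ k : ℕ, ∫ ω, M ω ^ k ∂P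
      = √2 ^ k * ∫ p, planeMax p ^ k ∂((gaussianReal 0 1).prod (gaussianReal 0 1)) := by
    intro k
    have hc : Continuous (fun p => planeMax p ^ k) := planeMax_continuous.pow k
    rw [← hlaw, integral_map (by fun_prop) hc.measurable.aestronglyMeasurable,
      ← integral_const_mul]
    refine integral_congr_ae ?_
    filter_upwards [hMe] with ω h
    rw [h, mul_pow]
  have hM1 : ∫ ω, M ω ∂P = 3 * √3 / (2 * √π) := by
    have := hI 1
    simp only [pow_one] at this
    rw [this, plane_one, sqrt_mul (by norm_num)]
    field_simp
  have hM2 : ∫ ω, M ω ^ 2 ∂P = 2 + 3 * √3 / (2 * π) := by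
    rw [hI 2, plane_two, s2]
    field_simp
    ring
  have hW1 : ∫ ω, W ω ∂P = 0 := by
    have := integral_id_gaussianReal (μ := 0) (v := 2)
    rwa [← hW, integral_map (by fun_prop) (by fun_prop)] at this
  have hWv : Var[W; P] = 2 := by
    have := variance_id_gaussianReal (μ := 0) (v := 2)
    rw [← hW, variance_map (by fun_prop) (by fun_prop)] at this
    exact this
  have hind : IndepFun W M P :=
    hindep.comp (φ := id) (ψ := fun z : ℝ × ℝ × ℝ => max z.1 (max z.2.1 z.2.2))
      measurable_id (by fun_prop)
  have hvM : Var[M; P] = 2 + 3 * √3 / (2 * π) - (3 * √3 / (2 * √π)) ^ 2 := by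
    rw [variance_eq_sub hML, ← hM1, ← hM2]; rfl
  have hv : Var[fun ω => W ω + M ω; P] = 2 + Var[M; P] := by
    rw [← hWv]; exact hind.variance_add hWL hML
  have hE : ∫ ω, (W ω + M ω) ∂P = 3 * √3 / (2 * √π) := by
    rw [integral_add (hWL.integrable (by norm_num)) (hML.integrable (by norm_num)), hW1, hM1,
      zero_add]
  have hv2 : Var[fun ω => W ω + M ω; P]
      = ∫ ω, (W ω + M ω) ^ 2 ∂P - (∫ ω, (W ω + M ω) ∂P) ^ 2 := variance_eq_sub (hWL.add hML)
  constructor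
  · rw [hE, hv, hvM] at hv2
    linarith
  · rw [show (fun ω => W ω + max (Z1 ω) (max (Z2 ω) (Z3 ω))) = fun ω => W ω + M ω from rfl,
      hv, hvM, div_pow, mul_pow, mul_pow, sq_sqrt pi_pos.le, s3]
    have := pi_pos
    field_simp
    ring
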